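/- The 2-cochain ψ on 𝒟^N defined by ψ(t^i[D]_j A, t^k[D]_l B) = δ_{i,−k}(−1)^j j! l! binom(i+j, j+l+1) tr(AB), where [D]_j = D(D−1)⋯(D−j+1), is a 2-cocycle on the Lie algebra 𝒟^N; equivalently, the bracket [x + λC, y + μC] = [x,y]_{𝒟^N} + ψ(x,y)C on 𝒟̂^N = 𝒟^N ⊕ ℂC is skew-symmetric and satisfies the Jacobi identity, so 𝒟̂^N is a Lie algebra and a central extension of 𝒟^N by ℂC. -/

import Mathlib

noncomputable section

open scoped BigOperators

/-- Falling factorial `[b]_s = b(b-1)⋯(b-s+1)` of an integer `b`. -/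
def dfall (b : ℤ) (s : ℕ) : ℤ := ∏ i ∈ Finset.range s, (b - (i : ℤ))

/-- Generalized binomial coefficient `binom(a, n)` as a complex number, for `a : ℤ`, `n : ℕ`. -/
def cbinom (a : ℤ) (n : ℕ) : ℂ :=
  (∏ i ∈ Finset.range n, ((a : ℂ) - (i : ℂ))) / (n.factorial : ℂ)

/-- The coefficient `δ_{i,-k} (-1)^j j! l! binom(i+j, j+l+1)` of the central element in the
bracket of `t^a (d/dt)^j A = t^i [D]_j A` (with `a = i + j`) and `t^b (d/dt)^l B = t^k [D]_l B`
(with `b = k + l`); it is still to be multiplied by `tr (AB)`. -/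
def cocycleCoeff (a : ℤ) (j : ℕ) (b : ℤ) (l : ℕ) : ℂ :=
  if a + b = (j : ℤ) + (l : ℤ) then
    (-1 : ℂ) ^ j * (j.factorial : ℂ) * (l.factorial : ℂ) * cbinom a (j + l + 1)
  else 0

/-- A module over the universal central extension `𝒟̂^N` of the Lie algebra of `N × N`-matrix
differential operators on the circle, presented through the action `ρ a j A` of the basis
elements `t^a (d/dt)^j A = t^{a-j} [D]_j A` (`a ∈ ℤ`, `j ∈ ℕ`, `A ∈ gl_N(ℂ)`) together with the
action `cC` of the central element `C`, subject to bilinearity in `A` and the commutation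
relations (2.3)/(3.12) of the paper. -/
structure DhatModule (N : ℕ) (V : Type*) [AddCommGroup V] [Module ℂ V] where
  ρ : ℤ → ℕ → Matrix (Fin N) (Fin N) ℂ → Module.End ℂ V
  cC : Module.End ℂ V
  ρ_add : ∀ a j A B, ρ a j (A + B) = ρ a j A + ρ a j B
  ρ_smul : ∀ a j (c : ℂ) A, ρ a j (c • A) = c • ρ a j A
  cC_comm : ∀ a j A, cC * ρ a j A = ρ a j A * cC
  bracket_rel : ∀ (a : ℤ) (j : ℕ) (A : Matrix (Fin N) (Fin N) ℂ) (b : ℤ) (l : ℕ)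
      (B : Matrix (Fin N) (Fin N) ℂ),
    ρ a j A * ρ b l B - ρ b l B * ρ a j A =
      ((∑ s ∈ Finset.range (j + 1),
        ((j.choose s : ℂ) * (dfall b s : ℂ)) • ρ (a + b - (s : ℤ)) (j + l - s) (A * B))
      - (∑ s ∈ Finset.range (l + 1),
        ((l.choose s : ℂ) * (dfall a s : ℂ)) • ρ (a + b - (s : ℤ)) (j + l - s) (B * A)))
      + (cocycleCoeff a j b l * (A * B).trace) • cC

namespace DhatModule

variable {N : ℕ} {V : Type*} [AddCommGroup V] [Module ℂ V]

/-- A subspace invariant under the `𝒟̂^N`-action. -/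
def IsSub (M : DhatModule N V) (U : Submodule ℂ V) : Prop :=
  (∀ a j A, ∀ v ∈ U, M.ρ a j A v ∈ U) ∧ ∀ v ∈ U, M.cC v ∈ U

/-- The module is trivial: `𝒟̂^N` acts by zero. -/
def IsTrivial (M : DhatModule N V) : Prop :=
  (∀ a j A (v : V), M.ρ a j A v = 0) ∧ ∀ v : V, M.cC v = 0

/-- Irreducibility: the module is nonzero and has no invariant subspace besides `⊥` and `⊤`. -/
def IsIrreducible (M : DhatModule N V) : Prop :=
  (⊥ : Submodule ℂ V) ≠ ⊤ ∧ ∀ U : Submodule ℂ V, M.IsSub U → U = ⊥ ∨ U = ⊤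

/-- Indecomposability: the module is nonzero and is not the direct sum of two nonzero
invariant subspaces. -/
def IsIndecomposable (M : DhatModule N V) : Prop :=
  (⊥ : Submodule ℂ V) ≠ ⊤ ∧ ∀ U W : Submodule ℂ V, M.IsSub U → M.IsSub W →
    U ⊓ W = ⊥ → U ⊔ W = ⊤ → U = ⊥ ∨ W = ⊥

end DhatModule

/-- Falling factorial `[x]_j = x(x-1)⋯(x-j+1)` in `ℂ`. -/
def cfall (x : ℂ) (j : ℕ) : ℂ := ∏ s ∈ Finset.range j, (x - (s : ℂ))

/-- The underlying space `ℂ^N[t,t⁻¹]`; the coefficient of `t^k` is stored at index `k`. -/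
abbrev MN (N : ℕ) : Type := ℤ →₀ (Fin N → ℂ)

/-- The operator `t^i D^j A` on `ℂ^N[t,t⁻¹]` (where `D = t d/dt`):
`t^i D^j A ⬝ (t^k v) = k^j t^{i+k} (A v)`.  This realizes `𝒟^N` faithfully as operators. -/
def gen (N : ℕ) (i : ℤ) (j : ℕ) (A : Matrix (Fin N) (Fin N) ℂ) : Module.End ℂ (MN N) :=
  Finsupp.lsum ℂ fun k : ℤ => (Finsupp.lsingle (k + i)) ∘ₗ (((k : ℂ) ^ j) • A.mulVecLin)

/-- The operator `t^i [D]_j A` on `ℂ^N[t,t⁻¹]`, where `[D]_j = D(D-1)⋯(D-j+1) = t^j(d/dt)^j`: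
`t^k v ↦ [k]_j t^{i+k} (A v)`. -/
def genD (N : ℕ) (i : ℤ) (j : ℕ) (A : Matrix (Fin N) (Fin N) ℂ) : Module.End ℂ (MN N) :=
  Finsupp.lsum ℂ fun k : ℤ => (Finsupp.lsingle (k + i)) ∘ₗ (cfall (k : ℂ) j • A.mulVecLin)

/-- `𝒟^N`, realized as the span of the operators `t^i [D]_j A`. -/
def DNspan (N : ℕ) : Submodule ℂ (Module.End ℂ (MN N)) :=
  Submodule.span ℂ
    {x : Module.End ℂ (MN N) |
      ∃ (i : ℤ) (j : ℕ) (A : Matrix (Fin N) (Fin N) ℂ), x = genD N i j A}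

/-- The operator `t^k v ↦ f k t^{k+i} (A v)` for an arbitrary coefficient function. -/
def auxOp (N : ℕ) (i : ℤ) (f : ℤ → ℂ) (A : Matrix (Fin N) (Fin N) ℂ) : Module.End ℂ (MN N) :=
  Finsupp.lsum ℂ fun k : ℤ => (Finsupp.lsingle (k + i)) ∘ₗ (f k • A.mulVecLin)

lemma genD_eq_auxOp (N : ℕ) (i : ℤ) (j : ℕ) (A : Matrix (Fin N) (Fin N) ℂ) :
    genD N i j A = auxOp N i (fun k => cfall (k : ℂ) j) A := rfl

lemma auxOp_single (N : ℕ) (i : ℤ) (f : ℤ → ℂ) (A : Matrix (Fin N) (Fin N) ℂ) (k : ℤ)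
    (v : Fin N → ℂ) :
    auxOp N i f A (Finsupp.single k v) = Finsupp.single (k + i) (f k • A.mulVec v) := by
  simp [auxOp]

lemma auxOp_mul (N : ℕ) (i : ℤ) (f : ℤ → ℂ) (A : Matrix (Fin N) (Fin N) ℂ)
    (k : ℤ) (g : ℤ → ℂ) (B : Matrix (Fin N) (Fin N) ℂ) :
    auxOp N i f A * auxOp N k g B = auxOp N (i + k) (fun n => f (n + k) * g n) (A * B) := by
  refine Finsupp.lhom_ext fun n v => ?_
  rw [Module.End.mul_apply, auxOp_single, auxOp_single, auxOp_single]
  congr 1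
  · ring
  · rw [Matrix.mulVec_smul, Matrix.mulVec_mulVec, smul_smul]

/-- Matrix block of an operator. -/
def auxBlk {N : ℕ} (x : Module.End ℂ (MN N)) (m k : ℤ) : Matrix (Fin N) (Fin N) ℂ :=
  Matrix.of fun a b => x (Finsupp.single k (Pi.single b 1)) m a

lemma auxBlk_add {N : ℕ} (x y : Module.End ℂ (MN N)) (m k : ℤ) :
    auxBlk (x + y) m k = auxBlk x m k + auxBlk y m k := by
  ext a b; simp [auxBlk]

lemma auxBlk_smul {N : ℕ} (c : ℂ) (x : Module.End ℂ (MN N)) (m k : ℤ) :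
    auxBlk (c • x) m k = c • auxBlk x m k := by
  ext a b; simp [auxBlk]

lemma auxBlk_zero {N : ℕ} (m k : ℤ) : auxBlk (0 : Module.End ℂ (MN N)) m k = 0 := by
  ext a b; simp [auxBlk]

lemma auxBlk_op (N : ℕ) (i : ℤ) (f : ℤ → ℂ) (A : Matrix (Fin N) (Fin N) ℂ) (m k : ℤ) :
    auxBlk (auxOp N i f A) m k = if m = k + i then f k • A else 0 := by
  ext a b
  simp only [auxBlk, Matrix.of_apply, auxOp_single, Finsupp.single_apply]
  by_cases h : m = k + i
  · simp [h]
  · rw [if_neg (fun h' => h h'.symm), if_neg h]; rfl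

/-- Weight `χ(m) - χ(k)`, where `χ` is the indicator of the nonnegative integers. -/
def auxW (m k : ℤ) : ℂ := (if 0 ≤ m then 1 else 0) - (if 0 ≤ k then 1 else 0)

lemma auxW_skew (m k : ℤ) : auxW m k = - auxW k m := by
  simp only [auxW, neg_sub]

/-- Banded operators. -/
def auxBand (N : ℕ) : Submodule ℂ (Module.End ℂ (MN N)) where
  carrier := {x | ∃ b : ℕ, ∀ m k : ℤ, (b : ℤ) < |m - k| → auxBlk x m k = 0}
  zero_mem' := ⟨0, fun m k _ => auxBlk_zero m k⟩
  add_mem' := by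
    rintro x y ⟨b, hb⟩ ⟨c, hc⟩
    refine ⟨b + c, fun m k h => ?_⟩
    push_cast at h
    rw [auxBlk_add, hb m k (by omega), hc m k (by omega), add_zero]
  smul_mem' := by
    rintro c x ⟨b, hb⟩
    exact ⟨b, fun m k h => by rw [auxBlk_smul, hb m k h, smul_zero]⟩

lemma auxOp_mem (N : ℕ) (i : ℤ) (f : ℤ → ℂ) (A : Matrix (Fin N) (Fin N) ℂ) :
    auxOp N i f A ∈ auxBand N := by
  refine ⟨i.natAbs, fun m k h => ?_⟩
  rw [auxBlk_op, if_neg]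
  rintro rfl
  simp at h

/-- Summand of the trace cocycle. -/
def auxT {N : ℕ} (x y : Module.End ℂ (MN N)) (p : ℤ × ℤ) : ℂ :=
  auxW p.1 p.2 * (auxBlk x p.1 p.2 * auxBlk y p.2 p.1).trace

lemma auxT_fin {N : ℕ} {x : Module.End ℂ (MN N)} (hx : x ∈ auxBand N)
    (y : Module.End ℂ (MN N)) : (Function.support (auxT x y)).Finite := by
  obtain ⟨b, hb⟩ := hx
  refine Set.Finite.subset ((Set.finite_Icc (-(b : ℤ)) b).prod (Set.finite_Icc (-(b : ℤ)) b)) ?_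
  rintro ⟨m, k⟩ h
  by_contra hc
  apply h
  by_cases hmk : (b : ℤ) < |m - k|
  · simp [auxT, hb m k hmk]
  · have : auxW m k = 0 := by
      simp only [Set.mem_prod, Set.mem_Icc] at hc
      simp only [auxW]
      split_ifs <;> first | (simp; done) | (exfalso; rw [not_lt, abs_le] at hmk; omega)
    simp [auxT, this]

/-- The cocycle on banded operators. -/
def auxPhi (N : ℕ) : auxBand N →ₗ[ℂ] auxBand N →ₗ[ℂ] ℂ :=
  LinearMap.mk₂ ℂ (fun x y => ∑ᶠ p, auxT x.1 y.1 p)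
    (by
      intro x x' y
      rw [← finsum_add_distrib (auxT_fin x.2 _) (auxT_fin x'.2 _)]
      refine finsum_congr fun p => ?_
      simp only [auxT, Submodule.coe_add, auxBlk_add, add_mul, Matrix.trace_add, mul_add])
    (by
      intro c x y
      rw [smul_finsum]
      refine finsum_congr fun p => ?_
      simp only [auxT, Submodule.coe_smul, auxBlk_smul, smul_mul_assoc, Matrix.trace_smul,
        smul_eq_mul]
      ring)
    (by
      intro x y y'
      rw [← finsum_add_distrib (auxT_fin x.2 _) (auxT_fin x.2 _)]
      refine finsum_congr fun p => ?_
      simp only [auxT, Submodule.coe_add, auxBlk_add, mul_add, Matrix.trace_add])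
    (by
      intro c x y
      rw [smul_finsum]
      refine finsum_congr fun p => ?_
      simp only [auxT, Submodule.coe_smul, auxBlk_smul, mul_smul_comm, Matrix.trace_smul,
        smul_eq_mul]
      ring)

lemma auxPhi_skew {N : ℕ} (x y : auxBand N) : auxPhi N x y = - auxPhi N y x := by
  simp only [auxPhi, LinearMap.mk₂_apply]
  rw [← finsum_neg_distrib, ← finsum_comp_equiv (Equiv.prodComm ℤ ℤ)]
  refine finsum_congr fun p => ?_
  simp only [auxT, Equiv.prodComm_apply, Prod.fst_swap, Prod.snd_swap]
  rw [Matrix.trace_mul_comm, auxW_skew, neg_mul]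

lemma auxPhi_op (N : ℕ) (i : ℤ) (f : ℤ → ℂ) (A : Matrix (Fin N) (Fin N) ℂ)
    (k : ℤ) (g : ℤ → ℂ) (B : Matrix (Fin N) (Fin N) ℂ) :
    auxPhi N ⟨_, auxOp_mem N i f A⟩ ⟨_, auxOp_mem N k g B⟩ =
      if i + k = 0 then (∑ᶠ n : ℤ, auxW (n + i) n * (f n * g (n + i))) * (A * B).trace else 0 := by
  simp only [auxPhi, LinearMap.mk₂_apply]
  split_ifs with h
  · have hinj : Function.Injective (fun n : ℤ => ((n + i, n) : ℤ × ℤ)) := by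
      intro a b hab; simpa using congrArg Prod.snd hab
    have hsupp : Function.support (auxT (auxOp N i f A) (auxOp N k g B)) ⊆
        Set.range (fun n : ℤ => ((n + i, n) : ℤ × ℤ)) := by
      rintro ⟨m, n⟩ hp
      by_contra hc
      apply hp
      have : m ≠ n + i := by
        rintro rfl; exact hc ⟨n, rfl⟩
      simp [auxT, auxBlk_op, this]
    rw [← finsum_mem_univ, ← finsum_mem_inter_support, Set.univ_inter,
      ← Set.inter_eq_right.mpr hsupp, finsum_mem_inter_support, finsum_mem_range hinj,
      finsum_mul]
    refine finsum_congr fun n => ?_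
    have h2 : n = n + i + k := by omega
    simp only [auxT, auxBlk_op, if_true]
    rw [if_pos h2, smul_mul_smul_comm, Matrix.trace_smul, smul_eq_mul]
    ring
  · refine finsum_eq_zero_of_forall_eq_zero fun p => ?_
    simp only [auxT, auxBlk_op]
    by_cases h1 : p.1 = p.2 + i
    · rw [if_neg (show ¬ p.2 = p.1 + k by omega)]; simp
    · rw [if_neg h1]; simp

lemma aux_gen_proj {V : Type*} [AddCommGroup V] [Module ℂ V]
    (p : Submodule ℂ (Module.End ℂ V)) :
    ∃ π : Module.End ℂ V →ₗ[ℂ] p, ∀ x (hx : x ∈ p), π x = ⟨x, hx⟩ := by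
  obtain ⟨π, hπ⟩ := p.subtype.exists_leftInverse_of_injective (Submodule.ker_subtype _)
  exact ⟨π, fun x hx => LinearMap.congr_fun hπ ⟨x, hx⟩⟩

/-- Extension to all operators. -/
lemma auxPsi_exists (N : ℕ) :
    ∃ Ψ : Module.End ℂ (MN N) →ₗ[ℂ] Module.End ℂ (MN N) →ₗ[ℂ] ℂ,
      (∀ x y, Ψ x y = - Ψ y x) ∧
      ∀ i f A k g B, Ψ (auxOp N i f A) (auxOp N k g B) =
        if i + k = 0 then (∑ᶠ n : ℤ, auxW (n + i) n * (f n * g (n + i))) * (A * B).trace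
        else 0 := by
  obtain ⟨π, hπ'⟩ := aux_gen_proj (V := MN N) (auxBand N)
  refine ⟨(auxPhi N).compl₁₂ π π, fun x y => ?_, fun i f A k g B => ?_⟩
  · simp only [LinearMap.compl₁₂_apply]; exact auxPhi_skew _ _
  · rw [LinearMap.compl₁₂_apply, hπ' _ (auxOp_mem N i f A), hπ' _ (auxOp_mem N k g B), auxPhi_op]

lemma auxW_fin (a b : ℤ) (F : ℤ → ℂ) :
    (Function.support fun n : ℤ => auxW (n + a) (n + b) * F n).Finite := by
  refine Set.Finite.subset (Set.finite_Icc (-(|a| + |b|)) (|a| + |b|)) ?_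
  intro n h
  by_contra hc
  apply h
  have : auxW (n + a) (n + b) = 0 := by
    simp only [Set.mem_Icc] at hc
    have h1 := neg_abs_le a
    have h2 := le_abs_self a
    have h3 := neg_abs_le b
    have h4 := le_abs_self b
    simp only [auxW]
    split_ifs <;> first | (simp; done) | (exfalso; omega)
  simp [this]

lemma aux_cyclic (N : ℕ) (Ψ : Module.End ℂ (MN N) →ₗ[ℂ] Module.End ℂ (MN N) →ₗ[ℂ] ℂ)
    (h : ∀ i f A k g B, Ψ (auxOp N i f A) (auxOp N k g B) =
        if i + k = 0 then (∑ᶠ n : ℤ, auxW (n + i) n * (f n * g (n + i))) * (A * B).trace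
        else 0)
    (i : ℤ) (f : ℤ → ℂ) (A : Matrix (Fin N) (Fin N) ℂ)
    (j : ℤ) (g : ℤ → ℂ) (B : Matrix (Fin N) (Fin N) ℂ)
    (k : ℤ) (e : ℤ → ℂ) (C : Matrix (Fin N) (Fin N) ℂ) :
    Ψ (auxOp N i f A * auxOp N j g B) (auxOp N k e C)
    + Ψ (auxOp N j g B * auxOp N k e C) (auxOp N i f A)
    + Ψ (auxOp N k e C * auxOp N i f A) (auxOp N j g B) = 0 := by
  simp only [auxOp_mul, h]
  by_cases hs : i + j + k = 0
  · rw [if_pos hs, if_pos (by omega), if_pos (by omega)]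
    have t1 : (B * C * A).trace = (A * B * C).trace := by
      rw [Matrix.trace_mul_comm, Matrix.mul_assoc]
    have t2 : (C * A * B).trace = (A * B * C).trace := by
      rw [Matrix.mul_assoc, Matrix.trace_mul_comm]
    rw [t1, t2, ← add_mul, ← add_mul]
    convert zero_mul _
    obtain rfl : k = -(i + j) := by omega
    have e2 := finsum_comp_equiv (Equiv.addRight (i + j)) (f := fun n : ℤ =>
      auxW (n + (j + -(i + j))) n * (g (n + -(i + j)) * e n * f (n + (j + -(i + j)))))
    have e3 := finsum_comp_equiv (Equiv.addRight j) (f := fun n : ℤ =>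
      auxW (n + (-(i + j) + i)) n * (e (n + i) * f n * g (n + (-(i + j) + i))))
    rw [← e2, ← e3]
    have r2 : ∀ n : ℤ, n + (i + j) + (j + -(i + j)) = n + j := fun n => by ring
    have r2' : ∀ n : ℤ, n + (i + j) + -(i + j) = n + 0 := fun n => by ring
    have r3 : ∀ n : ℤ, n + j + (-(i + j) + i) = n + 0 := fun n => by ring
    have r3' : ∀ n : ℤ, n + j + i = n + (i + j) := fun n => by ring
    simp only [Equiv.coe_addRight, r2, r2', r3, r3']
    have s1 : ∀ n : ℤ, auxW (n + (i + j)) n * (f (n + j) * g n * e (n + (i + j))) =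
      auxW (n + (i + j)) (n + 0) * (f (n + j) * g n * e (n + (i + j))) := fun n => by
        rw [add_zero]
    simp only [s1]
    rw [← finsum_add_distrib (auxW_fin _ _ _) (auxW_fin _ _ _),
      ← finsum_add_distrib ?_ (auxW_fin _ _ _)]
    · refine finsum_eq_zero_of_forall_eq_zero fun n => ?_
      simp only [auxW, add_zero]
      ring
    · exact ((auxW_fin _ _ _).union (auxW_fin _ _ _)).subset (Function.support_add _ _)
  · rw [if_neg hs, if_neg (by omega), if_neg (by omega)]; simp

lemma aux_gen_jacobi {V : Type*} [AddCommGroup V] [Module ℂ V]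
    (Ψ : Module.End ℂ V →ₗ[ℂ] Module.End ℂ V →ₗ[ℂ] ℂ) (S : Set (Module.End ℂ V))
    (h : ∀ x ∈ S, ∀ y ∈ S, ∀ z ∈ S, Ψ (x * y) z + Ψ (y * z) x + Ψ (z * x) y = 0)
    (x y z : Module.End ℂ V) (hx : x ∈ Submodule.span ℂ S) (hy : y ∈ Submodule.span ℂ S)
    (hz : z ∈ Submodule.span ℂ S) :
    Ψ ⁅x, y⁆ z + Ψ ⁅y, z⁆ x + Ψ ⁅z, x⁆ y = 0 := by
  induction hx using Submodule.span_induction with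
  | zero => simp [Ring.lie_def]
  | add x x' _ _ h1 h2 =>
    simp only [Ring.lie_def, add_mul, mul_add, map_sub, map_add, LinearMap.sub_apply,
      LinearMap.add_apply] at h1 h2 ⊢
    linear_combination h1 + h2
  | smul c x _ h1 =>
    simp only [Ring.lie_def, smul_mul_assoc, mul_smul_comm, map_sub, map_smul,
      LinearMap.sub_apply, LinearMap.smul_apply, smul_eq_mul] at h1 ⊢
    linear_combination c * h1
  | mem x hx =>
  induction hy using Submodule.span_induction with
  | zero => simp [Ring.lie_def]
  | add x x' _ _ h1 h2 =>
    simp only [Ring.lie_def, add_mul, mul_add, map_sub, map_add, LinearMap.sub_apply,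
      LinearMap.add_apply] at h1 h2 ⊢
    linear_combination h1 + h2
  | smul c x _ h1 =>
    simp only [Ring.lie_def, smul_mul_assoc, mul_smul_comm, map_sub, map_smul,
      LinearMap.sub_apply, LinearMap.smul_apply, smul_eq_mul] at h1 ⊢
    linear_combination c * h1
  | mem y hy =>
  induction hz using Submodule.span_induction with
  | zero => simp [Ring.lie_def]
  | add x x' _ _ h1 h2 =>
    simp only [Ring.lie_def, add_mul, mul_add, map_sub, map_add, LinearMap.sub_apply,
      LinearMap.add_apply] at h1 h2 ⊢
    linear_combination h1 + h2
  | smul c x _ h1 =>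
    simp only [Ring.lie_def, smul_mul_assoc, mul_smul_comm, map_sub, map_smul,
      LinearMap.sub_apply, LinearMap.smul_apply, smul_eq_mul] at h1 ⊢
    linear_combination c * h1
  | mem z hz =>
  simp only [Ring.lie_def, map_sub, LinearMap.sub_apply]
  linear_combination h x hx y hy z hz - h y hy x hx z hz

lemma aux_jacobi (N : ℕ) (Ψ : Module.End ℂ (MN N) →ₗ[ℂ] Module.End ℂ (MN N) →ₗ[ℂ] ℂ)
    (h : ∀ i f A k g B, Ψ (auxOp N i f A) (auxOp N k g B) =
        if i + k = 0 then (∑ᶠ n : ℤ, auxW (n + i) n * (f n * g (n + i))) * (A * B).trace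
        else 0)
    (x y z : Module.End ℂ (MN N)) (hx : x ∈ DNspan N) (hy : y ∈ DNspan N) (hz : z ∈ DNspan N) :
    Ψ ⁅x, y⁆ z + Ψ ⁅y, z⁆ x + Ψ ⁅z, x⁆ y = 0 := by
  refine aux_gen_jacobi (V := MN N) Ψ _ ?_ x y z hx hy hz
  rintro _ ⟨i, a, A, rfl⟩ _ ⟨j, b, B, rfl⟩ _ ⟨k, c, C, rfl⟩
  exact aux_cyclic N Ψ h i _ A j _ B k _ C

lemma aux_choose (j : ℕ) : ∀ (I l : ℕ),
    ∑ n ∈ Finset.range I, (n + j).choose j * (I - 1 - n).choose l = (I + j).choose (j + l + 1)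
  | 0, l => by
    rw [Finset.sum_range_zero, Nat.choose_eq_zero_of_lt]; omega
  | I + 1, 0 => by
    have := aux_choose j I 0
    simp only [Nat.choose_zero_right, mul_one] at this ⊢
    rw [Finset.sum_range_succ, this, show I + 1 + j = (I + j) + 1 by ring, Nat.choose_succ_succ]
    ring
  | I + 1, l + 1 => by
    have h1 := aux_choose j I l
    have h2 := aux_choose j I (l + 1)
    rw [Finset.sum_range_succ, show I + 1 + j = (I + j) + 1 by ring,
      show j + (l + 1) + 1 = (j + l + 1) + 1 by ring, Nat.choose_succ_succ, ← h1,
      Nat.succ_eq_add_one, show (j + l + 1) + 1 = j + (l + 1) + 1 by ring, ← h2,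
      ← Finset.sum_add_distrib]
    simp only [Nat.add_sub_cancel, Nat.sub_self, Nat.choose_zero_succ, mul_zero, add_zero]
    refine Finset.sum_congr rfl fun n hn => ?_
    rw [Finset.mem_range] at hn
    rw [show I - n = (I - 1 - n) + 1 by omega, Nat.choose_succ_succ]
    ring

lemma cfall_nat (M l : ℕ) : cfall (M : ℂ) l = (l.factorial : ℂ) * (M.choose l : ℂ) := by
  rw [← Nat.cast_mul, ← Nat.descFactorial_eq_factorial_mul_choose]
  induction l with
  | zero => simp [cfall]
  | succ l ih =>
    rw [cfall, Finset.prod_range_succ, ← cfall, ih, Nat.descFactorial_succ]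
    by_cases h : l ≤ M
    · push_cast [Nat.cast_sub h]; ring
    · rw [Nat.descFactorial_of_lt (by omega)]; simp

/-- Reflection of falling factorials. -/
lemma cfall_neg (x : ℂ) (n : ℕ) : cfall (-x) n = (-1) ^ n * cfall (x + n - 1) n := by
  simp only [cfall]
  have hp : (-1 : ℂ) ^ n = ∏ _s ∈ Finset.range n, (-1 : ℂ) := by simp
  rw [← Finset.prod_range_reflect, hp, ← Finset.prod_mul_distrib]
  refine Finset.prod_congr rfl fun s hs => ?_
  rw [Finset.mem_range] at hs
  rw [show n - 1 - s = n - (1 + s) by omega, Nat.cast_sub (by omega)]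
  push_cast; ring

lemma cbinom_eq (a : ℤ) (n : ℕ) : cbinom a n = cfall (a : ℂ) n / (n.factorial : ℂ) := rfl

lemma cocycleCoeff_skew (a : ℤ) (j : ℕ) (b : ℤ) (l : ℕ) :
    cocycleCoeff a j b l = - cocycleCoeff b l a j := by
  unfold cocycleCoeff
  by_cases h : a + b = (j : ℤ) + l
  · rw [if_pos h, if_pos (by omega), cbinom_eq, cbinom_eq]
    have hb : ((b : ℤ) : ℂ) = -((a : ℂ) - j - l) := by
      have : b = -(a - j - l) := by omega
      rw [this]; push_cast; ring
    rw [hb, cfall_neg, show l + j + 1 = j + l + 1 by ring,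
      show (a : ℂ) - j - l + ((j + l + 1 : ℕ) : ℂ) - 1 = a by push_cast; ring]
    have hl : ((-1 : ℂ) ^ l) * (-1) ^ l = 1 := by rw [← mul_pow]; simp
    rw [pow_succ, pow_add]
    linear_combination (-(-1 : ℂ) ^ j * j.factorial * l.factorial * cfall a (j + l + 1) /
      (j + l + 1).factorial) * hl
  · rw [if_neg h, if_neg (by omega), neg_zero]

lemma aux_sum (I : ℕ) (F : ℤ → ℂ) :
    ∑ᶠ n : ℤ, auxW (n + I) n * F n = ∑ n ∈ Finset.range I, F (-(n + 1 : ℤ)) := by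
  rw [finsum_eq_sum_of_support_subset (s := (Finset.range I).image fun n : ℕ => -(n + 1 : ℤ))]
  · rw [Finset.sum_image (by intro a _ b _ hab; simpa using hab)]
    refine Finset.sum_congr rfl fun n hn => ?_
    rw [Finset.mem_range] at hn
    rw [auxW, if_pos (by omega), if_neg (by omega)]
    ring
  · intro n hn
    by_contra hc
    apply hn
    have : auxW (n + I) n = 0 := by
      have hc' : ¬ (n < 0 ∧ 0 ≤ n + I) := by
        rintro ⟨h1, h2⟩
        apply hc
        simp only [Finset.coe_image, Set.mem_image, Finset.coe_range, Set.mem_Iio]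
        exact ⟨(-n - 1).toNat, by omega, by omega⟩
      simp only [auxW]
      split_ifs <;> first | (simp; done) | (exfalso; omega)
    simp [this]

lemma aux_eval (I j l : ℕ) :
    ∑ᶠ n : ℤ, auxW (n + I) n * (cfall (n : ℂ) j * cfall ((n + I : ℤ) : ℂ) l) =
      cocycleCoeff (I + j) j (-I + l) l := by
  rw [aux_sum I (fun n : ℤ => cfall (n : ℂ) j * cfall ((n + I : ℤ) : ℂ) l), cocycleCoeff,
    if_pos (by ring), cbinom_eq]
  have e : (((I : ℤ) + j : ℤ) : ℂ) = ((I + j : ℕ) : ℂ) := by push_cast; ring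
  rw [e, cfall_nat, ← aux_choose, mul_div_cancel_left₀ _ (Nat.cast_ne_zero.mpr (Nat.factorial_ne_zero _)), Nat.cast_sum,
    Finset.mul_sum]
  refine Finset.sum_congr rfl fun n hn => ?_
  rw [Finset.mem_range] at hn
  have e1 : ((-(n + 1 : ℤ) : ℤ) : ℂ) = -((n : ℂ) + 1) := by push_cast; ring
  have e2 : ((-(n + 1 : ℤ) + I : ℤ) : ℂ) = ((I - 1 - n : ℕ) : ℂ) := by
    have : (-(n + 1 : ℤ) + I : ℤ) = ((I - 1 - n : ℕ) : ℤ) := by omega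
    rw [this]; norm_cast
  rw [e1, e2, cfall_neg, cfall_nat,
    show (n : ℂ) + 1 + j - 1 = ((n + j : ℕ) : ℂ) by push_cast; ring, cfall_nat]
  push_cast; ring

/-- The 2-cochain `ψ` on `𝒟^N` with
`ψ(t^i[D]_j A, t^k[D]_l B) = δ_{i,-k} (-1)^j j! l! binom(i+j, j+l+1) tr(AB)` is a 2-cocycle:
its bilinear extension `Ψ` is skew-symmetric and satisfies the cocycle identity on `𝒟^N`;
equivalently, the bracket `[(x,λ), (y,μ)] = ([x,y], Ψ(x,y))` on `𝒟̂^N = 𝒟^N ⊕ ℂC` is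
skew-symmetric and satisfies the Jacobi identity, so `𝒟̂^N` is a Lie algebra and a central
extension of `𝒟^N` by `ℂC`. -/
theorem psi_is_two_cocycle (N : ℕ) (hN : 1 ≤ N) :
    ∃ Ψ : Module.End ℂ (MN N) →ₗ[ℂ] Module.End ℂ (MN N) →ₗ[ℂ] ℂ,
      (∀ (i : ℤ) (j : ℕ) (A : Matrix (Fin N) (Fin N) ℂ) (k : ℤ) (l : ℕ)
          (B : Matrix (Fin N) (Fin N) ℂ),
        Ψ (genD N i j A) (genD N k l B) =
          cocycleCoeff (i + (j : ℤ)) j (k + (l : ℤ)) l * (A * B).trace) ∧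
      (∀ x ∈ DNspan N, ∀ y ∈ DNspan N, Ψ x y = -Ψ y x) ∧
      (∀ x ∈ DNspan N, ∀ y ∈ DNspan N, ∀ z ∈ DNspan N,
        Ψ ⁅x, y⁆ z + Ψ ⁅y, z⁆ x + Ψ ⁅z, x⁆ y = 0) := by
  obtain ⟨Ψ, hskew, h⟩ := auxPsi_exists N
  have key : ∀ (I : ℕ) (j : ℕ) (A : Matrix (Fin N) (Fin N) ℂ) (k : ℤ) (l : ℕ)
          (B : Matrix (Fin N) (Fin N) ℂ),
        Ψ (genD N I j A) (genD N k l B) =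
          cocycleCoeff ((I : ℤ) + (j : ℤ)) j (k + (l : ℤ)) l * (A * B).trace := by
    intro I j A k l B
    rw [genD_eq_auxOp, genD_eq_auxOp, h]
    split_ifs with hk
    · obtain rfl : k = -I := by omega
      rw [← aux_eval]
    · rw [cocycleCoeff, if_neg (by omega), zero_mul]
  refine ⟨Ψ, ?_, fun x _ y _ => hskew x y, fun x hx y hy z hz => aux_jacobi N Ψ h x y z hx hy hz⟩
  intro i j A k l B
  by_cases hi : 0 ≤ i
  · obtain ⟨I, rfl⟩ := Int.eq_ofNat_of_zero_le hi
    exact key I j A k l B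
  · by_cases hk : 0 ≤ k
    · obtain ⟨K, rfl⟩ := Int.eq_ofNat_of_zero_le hk
      rw [hskew, key, cocycleCoeff_skew (i + j), Matrix.trace_mul_comm]
      ring
    · rw [genD_eq_auxOp, genD_eq_auxOp, h, if_neg (by omega), cocycleCoeff, if_neg (by omega),
        zero_mul]
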